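/- arXiv:2401.00244 — 2 statements merged into one kernel-verified Lean document; each statement's English description precedes it below -/
import Mathlib

section
/- Let p ≥ 5 be a prime and let n ≥ 1 be an integer. Then (1/(72pn−6))·csc²(π/p) − 1 + c(1, 2; 1/p, 2/p) + c(2, 3; 2/p, 3/p) + c(12pn−7, 12pn−1; (12pn−7)/p, (12pn−1)/p) = −cot(2π/p)·cot(3π/p). -/
open Real
open scoped Classical

/-- `c(z) = cot(πz)` if `z ∉ ℤ`, and `0` if `z ∈ ℤ`. -/
noncomputable def cFn (z : ℝ) : ℝ :=
  if ∃ m : ℤ, z = m then 0 else Real.cot (Real.pi * z)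

/-- The Dedekind–Dieter cotangent sum
`c(b,a;x,y) = (1/a) ∑_{k=0}^{a-1} c((b/a)(k+y) - x) c((k+y)/a)`. -/
noncomputable def dedekindDieter (b a : ℤ) (x y : ℝ) : ℝ :=
  (1 / (a : ℝ)) * ∑ k ∈ Finset.range a.toNat,
    cFn ((b : ℝ) / (a : ℝ) * ((k : ℝ) + y) - x) * cFn (((k : ℝ) + y) / (a : ℝ))

/-!
Write `x = πθ`. The partial-fraction identity
`cot u cot v = cot (u - v) (cot v - cot u) - 1` and the multiplication formula
`∑ cot (x + πk/N) = N cot (N x)` evaluate the elementary sum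
`c(1, N; θ, Nθ) = csc² x / N - 1 - cot x cot (N x)`, and reflecting `k ↦ -k` in the first factor
gives `c(a, a + 1; aθ, (a + 1)θ) = -c(1, a + 1; θ, (a + 1)θ)`. If `d ∣ N + 1` and `(N + 1)θ ∈ ℤ`,
expanding `cot (d u)` by the multiplication formula likewise yields
`c(d, N; dθ, Nθ) = (csc² x / N + 1 + cot² x) / d - 2`, since multiplication by `N` acts as `-1` on
`x` and on every `πm/d` modulo `π`. For `d = a (a + 1)` the `csc²` terms cancel because
`1 / a - 1 / (a + 1) = 1 / d`, and what is left is the partial-fraction identity for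
`cot (a x) cot ((a + 1) x)`. The paper's case is `a = 2`, `N = 12pn - 1`, `θ = 1/p`.
-/

lemma cot_zero : cot 0 = 0 := by simp [cot_eq_cos_div_sin]

lemma cot_neg (x : ℝ) : cot (-x) = -cot x := by
  rw [← tan_inv_eq_cot, ← tan_inv_eq_cot, tan_neg, inv_neg]

lemma cot_periodic : Function.Periodic cot π := fun x ↦ by
  rw [← tan_inv_eq_cot, ← tan_inv_eq_cot, tan_periodic x]

lemma cot_int_mul_pi_sub (x : ℝ) (n : ℤ) : cot (n * π - x) = -cot x := by
  rw [cot_periodic.int_mul_sub_eq, cot_neg]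

lemma one_div_sin_sq {x : ℝ} (hx : sin x ≠ 0) : 1 / sin x ^ 2 = 1 + cot x ^ 2 := by
  rw [cot_eq_cos_div_sin, div_pow, one_add_div (pow_ne_zero 2 hx), sin_sq_add_cos_sq]

lemma cot_mul_cot {x y : ℝ} (hx : sin x ≠ 0) (hy : sin y ≠ 0) (hxy : sin (x - y) ≠ 0) :
    cot x * cot y = cot (x - y) * (cot y - cot x) - 1 := by
  have hdiff : cot y - cot x = sin (x - y) / (sin x * sin y) := by
    rw [cot_eq_cos_div_sin, cot_eq_cos_div_sin, sin_sub]
    field_simp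
  rw [hdiff, cot_eq_cos_div_sin (x - y), div_mul_div_comm, mul_comm (cos (x - y)),
    mul_div_mul_left _ _ hxy, cos_sub, cot_eq_cos_div_sin, cot_eq_cos_div_sin]
  field_simp
  ring

lemma sin_ne_zero_of_natCast_mul {N : ℕ} {x : ℝ} (h : sin (N * x) ≠ 0) :
    sin x ≠ 0 := by
  contrapose h
  obtain ⟨j, rfl⟩ := sin_eq_zero_iff.mp h
  exact sin_eq_zero_iff.mpr ⟨N * j, by push_cast; ring⟩

lemma sin_natCast_mul_ne_zero_of_dvd {a b : ℕ} (hab : a ∣ b) {x : ℝ} (h : sin (b * x) ≠ 0) :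
    sin (a * x) ≠ 0 := by
  obtain ⟨c, rfl⟩ := hab
  apply sin_ne_zero_of_natCast_mul (N := c)
  convert h using 2
  push_cast
  ring

lemma cot_mul_cot_add_one_mul {a x : ℝ} (hx : sin x ≠ 0) (ha : sin (a * x) ≠ 0)
    (ha' : sin ((a + 1) * x) ≠ 0) :
    cot (a * x) * cot ((a + 1) * x) = cot x * (cot (a * x) - cot ((a + 1) * x)) - 1 := by
  have hsub : (a + 1) * x - a * x = x := by ring
  rw [mul_comm, cot_mul_cot ha' ha (hsub.symm ▸ hx), hsub]

lemma sin_pi_mul_div_add_ne_zero {N : ℕ} {x : ℝ} (h : sin (N * x) ≠ 0) (k : ℕ) :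
    sin (π * k / N + x) ≠ 0 := by
  have hN : (N : ℝ) ≠ 0 := by rintro hN; simp [hN] at h
  apply sin_ne_zero_of_natCast_mul (N := N)
  have harg : N * (π * k / N + x) = N * x + k * π := by field_simp; ring
  rw [harg, sin_add_nat_mul_pi]
  exact mul_ne_zero (pow_ne_zero _ (by norm_num)) h

lemma sin_pi_mul_div_ne_zero {N k : ℕ} (hk : 0 < k) (hkN : k < N) : sin (π * k / N) ≠ 0 := by
  have hk' : (0 : ℝ) < k := by exact_mod_cast hk
  have hkN' : (k : ℝ) < N := by exact_mod_cast hkN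
  have hN : (0 : ℝ) < N := hk'.trans hkN'
  refine (sin_pos_of_pos_of_lt_pi (by positivity) ?_).ne'
  rw [div_lt_iff₀ hN]
  exact mul_lt_mul_of_pos_left hkN' pi_pos

lemma sin_int_mul_pi_sub_ne_zero {x : ℝ} (hx : sin x ≠ 0) (j : ℤ) : sin (j * π - x) ≠ 0 := by
  rw [sin_int_mul_pi_sub, neg_ne_zero]
  exact mul_ne_zero (zpow_ne_zero _ (by norm_num)) hx

/-! ### The multiplication formula for the cotangent -/

lemma sum_one_div_one_sub_mul_pow {K : Type*} [Field K] {ζ : K} {N : ℕ}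
    (hζ : IsPrimitiveRoot ζ N) {w : K} (hw : w ^ N ≠ 1) :
    ∑ k ∈ Finset.range N, 1 / (1 - w * ζ ^ k) = N / (1 - w ^ N) := by
  have hroot (j : ℕ) : (ζ ^ j) ^ N = 1 := by rw [pow_right_comm, hζ.pow_eq_one, one_pow]
  have hgeom (k : ℕ) :
      1 / (1 - w * ζ ^ k) = (∑ j ∈ Finset.range N, w ^ j * (ζ ^ j) ^ k) / (1 - w ^ N) := by
    have hpow : (w * ζ ^ k) ^ N = w ^ N := by rw [mul_pow, hroot, mul_one]
    have hne : w * ζ ^ k ≠ 1 := fun h ↦ hw (by rw [← hpow, h, one_pow])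
    have hterm (j : ℕ) : w ^ j * (ζ ^ j) ^ k = (w * ζ ^ k) ^ j := by
      rw [mul_pow, pow_right_comm]
    simp only [hterm]
    rw [div_eq_div_iff (sub_ne_zero.mpr hne.symm) (sub_ne_zero.mpr hw.symm), one_mul, ← hpow,
      geom_sum_mul_neg]
  have horth (j : ℕ) (hj : j ∈ Finset.range N) (hj0 : j ≠ 0) :
      ∑ k ∈ Finset.range N, w ^ j * (ζ ^ j) ^ k = 0 := by
    rw [← Finset.mul_sum, geom_sum_eq (hζ.pow_ne_one_of_pos_of_lt hj0 (Finset.mem_range.mp hj)),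
      hroot, sub_self, zero_div, mul_zero]
  have hN : N ≠ 0 := by rintro rfl; simp at hw
  rw [Finset.sum_congr rfl fun k _ ↦ hgeom k, ← Finset.sum_div, Finset.sum_comm,
    Finset.sum_eq_single_of_mem 0 (by simpa [Nat.pos_iff_ne_zero] using hN) horth]
  simp

lemma complex_cot_eq_exp {z : ℂ} (h : Complex.exp (2 * Complex.I * z) ≠ 1) :
    Complex.cot z = Complex.I - 2 * Complex.I * (1 / (1 - Complex.exp (2 * Complex.I * z))) := by
  have hne : 1 - Complex.exp (2 * Complex.I * z) ≠ 0 := sub_ne_zero.mpr h.symm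
  have hI := Complex.I_ne_zero
  rw [Complex.cot_eq_exp_ratio]
  field_simp
  rw [Complex.I_sq]
  ring

lemma exp_two_I_mul_ne_one {x : ℝ} (hx : sin x ≠ 0) : Complex.exp (2 * Complex.I * x) ≠ 1 := by
  intro h
  obtain ⟨j, hj⟩ := Complex.exp_eq_one_iff.mp h
  refine hx (sin_eq_zero_iff.mpr ⟨j, ?_⟩)
  have hjx : (2 * Complex.I) * ((j : ℂ) * π) = (2 * Complex.I) * x := by linear_combination -hj
  exact_mod_cast mul_left_cancel₀ (by simp) hjx

lemma sum_cot_add_of_sin_ne_zero {N : ℕ} {x : ℝ} (hx : sin (N * x) ≠ 0) :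
    ∑ k ∈ Finset.range N, cot (π * k / N + x) = N * cot (N * x) := by
  have hN : N ≠ 0 := by rintro rfl; simp at hx
  set w := Complex.exp (2 * Complex.I * x)
  set ζ := Complex.exp (2 * π * Complex.I / N)
  have hexp (k : ℕ) : Complex.exp (2 * Complex.I * (π * k / N + x : ℝ)) = w * ζ ^ k := by
    rw [← Complex.exp_nat_mul, ← Complex.exp_add]
    congr 1
    push_cast
    ring
  have hexpN : Complex.exp (2 * Complex.I * (N * x : ℝ)) = w ^ N := by
    rw [← Complex.exp_nat_mul]
    congr 1
    push_cast
    ring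
  have hcot (k : ℕ) : ((cot (π * k / N + x) : ℝ) : ℂ)
      = Complex.I - 2 * Complex.I * (1 / (1 - w * ζ ^ k)) := by
    rw [Complex.ofReal_cot,
      complex_cot_eq_exp (exp_two_I_mul_ne_one (sin_pi_mul_div_add_ne_zero hx k)), hexp]
  have hw : w ^ N ≠ 1 := hexpN ▸ exp_two_I_mul_ne_one hx
  apply Complex.ofReal_injective
  rw [Complex.ofReal_sum, Finset.sum_congr rfl fun k _ ↦ hcot k, Finset.sum_sub_distrib,
    ← Finset.mul_sum, sum_one_div_one_sub_mul_pow (Complex.isPrimitiveRoot_exp N hN) hw,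
    Complex.ofReal_mul, Complex.ofReal_cot, complex_cot_eq_exp (exp_two_I_mul_ne_one hx), hexpN]
  simp only [Finset.sum_const, Finset.card_range, nsmul_eq_mul, Complex.ofReal_natCast]
  ring

lemma sum_cot_add_periodic (N : ℕ) :
    Function.Periodic (fun x ↦ ∑ k ∈ Finset.range N, cot (π * k / N + x)) (π / N) := by
  intro x
  rcases eq_or_ne N 0 with rfl | hN
  · simp
  have hN' : (N : ℝ) ≠ 0 := by exact_mod_cast hN
  have hshift (k : ℕ) : π * k / N + (x + π / N) = π * (k + 1 : ℕ) / N + x := by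
    push_cast; ring
  have hlast : π * N / N + x = π * (0 : ℕ) / N + x + π := by
    rw [mul_div_cancel_right₀ _ hN', Nat.cast_zero, mul_zero, zero_div, zero_add, add_comm]
  simp only [hshift]
  rw [← add_left_inj (cot (π * (0 : ℕ) / N + x)),
    ← Finset.sum_range_succ' (fun k : ℕ ↦ cot (π * k / N + x)), Finset.sum_range_succ, hlast,
    cot_periodic]

lemma sum_cot_pi_mul_div (N : ℕ) : ∑ k ∈ Finset.range N, cot (π * k / N) = 0 := by
  have hreflect : ∑ k ∈ Finset.range N, cot (π * k / N)
      = -∑ k ∈ Finset.range N, cot (π * k / N + π / N) := by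
    rw [← Finset.sum_range_reflect, ← Finset.sum_neg_distrib]
    refine Finset.sum_congr rfl fun k hk ↦ ?_
    have hkN : k + 1 ≤ N := Finset.mem_range.mp hk
    have hN : (N : ℝ) ≠ 0 := by exact_mod_cast (by omega : N ≠ 0)
    rw [← cot_int_mul_pi_sub _ 1, Nat.sub_sub, add_comm 1 k, Nat.cast_sub hkN]
    congr 1
    push_cast
    field_simp
  have hperiod := sum_cot_add_periodic N 0
  simp only [zero_add, add_zero] at hperiod
  rw [hperiod] at hreflect
  linarith

/- At a pole of the right-hand side both sides vanish, because `cot` is `0` at its poles. -/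
lemma sum_cot_add (N : ℕ) (x : ℝ) :
    ∑ k ∈ Finset.range N, cot (π * k / N + x) = N * cot (N * x) := by
  by_cases hx : sin (N * x) = 0
  · rcases eq_or_ne N 0 with rfl | hN
    · simp
    have hN' : (N : ℝ) ≠ 0 := by exact_mod_cast hN
    obtain ⟨j, hj⟩ := sin_eq_zero_iff.mp hx
    have hx' : x = j * (π / N) := by field_simp; linarith
    have hcot : cot (N * x) = 0 := by rw [← hj, ← cot_zero, cot_periodic.int_mul_eq]
    have hsum := (sum_cot_add_periodic N).int_mul_eq j
    simp only [add_zero] at hsum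
    rw [hcot, mul_zero, hx', hsum, sum_cot_pi_mul_div]
  · exact sum_cot_add_of_sin_ne_zero hx

/-! ### Sums of products of cotangents -/

lemma sum_cot_add_mul_cot_add {N : ℕ} {x y : ℝ} (hx : sin (N * x) ≠ 0) (hy : sin (N * y) ≠ 0)
    (hxy : sin (x - y) ≠ 0) :
    ∑ k ∈ Finset.range N, cot (π * k / N + x) * cot (π * k / N + y)
      = N * (cot (x - y) * (cot (N * y) - cot (N * x)) - 1) := by
  have hprod (k : ℕ) : cot (π * k / N + x) * cot (π * k / N + y)
      = cot (x - y) * (cot (π * k / N + y) - cot (π * k / N + x)) - 1 := by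
    have hsub : π * k / N + x - (π * k / N + y) = x - y := by ring
    rw [cot_mul_cot (sin_pi_mul_div_add_ne_zero hx k) (sin_pi_mul_div_add_ne_zero hy k)
      (hsub ▸ hxy), hsub]
  simp only [hprod, Finset.sum_sub_distrib, ← Finset.mul_sum, sum_cot_add, Finset.sum_const,
    Finset.card_range, nsmul_eq_mul]
  ring

lemma sum_cot_add_mul_cot {N : ℕ} {x : ℝ} (hx : sin (N * x) ≠ 0) :
    ∑ k ∈ Finset.range N, cot (π * k / N + x) * cot (π * k / N)
      = 1 / sin x ^ 2 - N * (1 + cot x * cot (N * x)) := by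
  have hsin : sin x ≠ 0 := sin_ne_zero_of_natCast_mul hx
  -- The product formula fails only at the pole `k = 0`, where its defect is `1 / sin x ^ 2`.
  have hprod (k : ℕ) (hk : k ∈ Finset.range N) : cot (π * k / N + x) * cot (π * k / N)
      = cot x * (cot (π * k / N) - cot (π * k / N + x)) - 1
        + if k = 0 then 1 / sin x ^ 2 else 0 := by
    rcases Nat.eq_zero_or_pos k with rfl | hpos
    · rw [if_pos rfl, one_div_sin_sq hsin]
      simp only [Nat.cast_zero, mul_zero, zero_div, zero_add, cot_zero]
      ring
    · have hsub : π * k / N + x - π * k / N = x := by ring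
      rw [cot_mul_cot (sin_pi_mul_div_add_ne_zero hx k)
        (sin_pi_mul_div_ne_zero hpos (Finset.mem_range.mp hk)) (hsub.symm ▸ hsin), hsub,
        if_neg hpos.ne', add_zero]
  have hN : N ≠ 0 := by rintro rfl; simp at hx
  rw [Finset.sum_congr rfl hprod]
  simp only [Finset.sum_add_distrib, Finset.sum_sub_distrib, ← Finset.mul_sum, sum_cot_add,
    sum_cot_pi_mul_div, Finset.sum_const, Finset.card_range, nsmul_eq_mul, Finset.sum_ite_eq',
    Finset.mem_range, Nat.pos_of_ne_zero hN, if_true]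
  ring

lemma sin_sub_pi_mul_div_ne_zero {d : ℕ} {x : ℝ} (h : sin (d * x) ≠ 0) (m : ℕ) :
    sin (x - π * m / d) ≠ 0 := by
  have hneg : sin (d * -x) ≠ 0 := by simpa using h
  rw [← neg_sub, sin_neg, neg_ne_zero, sub_eq_add_neg]
  exact sin_pi_mul_div_add_ne_zero hneg m

lemma sum_cot_add_mul_cot_add_pi_mul_div {d N : ℕ} {x : ℝ} (hd : sin (d * x) ≠ 0)
    (hdvd : d ∣ N + 1) {j : ℤ} (hx : (N + 1) * x = j * π) {m : ℕ} (hm : m < d) :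
    ∑ k ∈ Finset.range N, cot (π * k / N + x) * cot (π * k / N + π * m / d)
      = (if m = 0 then 1 / sin x ^ 2 + N * (1 + cot x ^ 2) else 0)
        - N * (2 + cot x * cot (π * m / d)) := by
  have hsin : sin x ≠ 0 := sin_ne_zero_of_natCast_mul hd
  have hNx : N * x = j * π - x := by linarith
  have hsinNx : sin (N * x) ≠ 0 := hNx ▸ sin_int_mul_pi_sub_ne_zero hsin j
  rcases Nat.eq_zero_or_pos m with rfl | hpos
  · simp only [Nat.cast_zero, mul_zero, zero_div, add_zero, if_true, cot_zero]
    rw [sum_cot_add_mul_cot hsinNx, hNx, cot_int_mul_pi_sub]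
    ring
  · obtain ⟨q, hq⟩ := hdvd
    have hd0 : (d : ℝ) ≠ 0 := by exact_mod_cast (by omega : d ≠ 0)
    have hq' : (N : ℝ) + 1 = d * q := by exact_mod_cast hq
    have hNm : N * (π * m / d) = (q * m : ℤ) * π - π * m / d := by
      rw [eq_sub_of_add_eq hq']
      push_cast
      field_simp
    have hsinm : sin (π * m / d) ≠ 0 := sin_pi_mul_div_ne_zero hpos hm
    have hsinNm : sin (N * (π * m / d)) ≠ 0 := hNm ▸ sin_int_mul_pi_sub_ne_zero hsinm _
    have hsub := sin_sub_pi_mul_div_ne_zero hd m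
    rw [sum_cot_add_mul_cot_add hsinNx hsinNm hsub, hNm, hNx, cot_int_mul_pi_sub,
      cot_int_mul_pi_sub, if_neg hpos.ne', cot_mul_cot hsin hsinm hsub]
    ring

lemma sum_cot_mul_cot_add_of_dvd_succ {d N : ℕ} {x : ℝ} (hd : sin (d * x) ≠ 0)
    (hdvd : d ∣ N + 1) {j : ℤ} (hx : (N + 1) * x = j * π) :
    ∑ k ∈ Finset.range N, cot (d * (π * k / N)) * cot (π * k / N + x)
      = (1 / sin x ^ 2 + N * (1 + cot x ^ 2)) / d - 2 * N := by
  have hd0 : d ≠ 0 := by rintro rfl; simp at hd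
  have hd0' : (d : ℝ) ≠ 0 := by exact_mod_cast hd0
  have hmult (k : ℕ) : cot (d * (π * k / N)) * cot (π * k / N + x)
      = (∑ m ∈ Finset.range d, cot (π * k / N + x) * cot (π * k / N + π * m / d)) / d := by
    rw [← Finset.mul_sum, eq_div_iff hd0']
    simp only [add_comm (π * k / N) (π * _ / d), sum_cot_add]
    ring
  rw [Finset.sum_congr rfl fun k _ ↦ hmult k, ← Finset.sum_div, Finset.sum_comm,
    Finset.sum_congr rfl fun m hm ↦
      sum_cot_add_mul_cot_add_pi_mul_div hd hdvd hx (Finset.mem_range.mp hm)]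
  simp only [Finset.sum_sub_distrib, Finset.sum_ite_eq', Finset.mem_range,
    Nat.pos_of_ne_zero hd0, if_true, ← Finset.mul_sum, Finset.sum_add_distrib,
    sum_cot_pi_mul_div, Finset.sum_const, Finset.card_range, nsmul_eq_mul]
  field_simp
  ring

/-! ### Dedekind–Dieter sums with proportional arguments -/

lemma cFn_eq_cot (z : ℝ) : cFn z = cot (π * z) := by
  unfold cFn
  split_ifs with hz
  · obtain ⟨m, rfl⟩ := hz
    rw [mul_comm, cot_periodic.int_mul_eq, cot_zero]
  · rfl

lemma dedekindDieter_eq_sum_cot (b : ℤ) {a : ℕ} (ha : a ≠ 0) (θ : ℝ) :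
    dedekindDieter b a (b * θ) (a * θ)
      = (∑ k ∈ Finset.range a, cot (b * (π * k / a)) * cot (π * k / a + π * θ)) / a := by
  have ha' : (a : ℝ) ≠ 0 := by exact_mod_cast ha
  rw [dedekindDieter, Int.toNat_natCast, Int.cast_natCast, one_div_mul_eq_div]
  congr 1
  refine Finset.sum_congr rfl fun k _ ↦ ?_
  rw [cFn_eq_cot, cFn_eq_cot]
  congr 2 <;> field_simp
  ring

lemma dedekindDieter_self_sub (b : ℤ) {a : ℕ} (ha : a ≠ 0) (θ : ℝ) :
    dedekindDieter (a - b) a ((a - b) * θ) (a * θ) = -dedekindDieter b a (b * θ) (a * θ) := by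
  have ha' : (a : ℝ) ≠ 0 := by exact_mod_cast ha
  have hcast : ((a : ℝ) - b) = ((a - b : ℤ) : ℝ) := by push_cast; rfl
  rw [hcast, dedekindDieter_eq_sum_cot _ ha, dedekindDieter_eq_sum_cot _ ha, ← neg_div,
    ← Finset.sum_neg_distrib]
  congr 1
  refine Finset.sum_congr rfl fun k _ ↦ ?_
  have hreflect : ((a - b : ℤ) : ℝ) * (π * k / a) = (k : ℤ) * π - b * (π * k / a) := by
    push_cast
    field_simp
  rw [hreflect, cot_int_mul_pi_sub, neg_mul]

lemma dedekindDieter_one {a : ℕ} {θ : ℝ} (h : sin (a * (π * θ)) ≠ 0) :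
    dedekindDieter 1 a θ (a * θ)
      = 1 / sin (π * θ) ^ 2 / a - (1 + cot (π * θ) * cot (a * (π * θ))) := by
  have ha : a ≠ 0 := by rintro rfl; simp at h
  have ha' : (a : ℝ) ≠ 0 := by exact_mod_cast ha
  have hmul := dedekindDieter_eq_sum_cot 1 ha θ
  simp only [Int.cast_one, one_mul, mul_comm (cot (π * _ / a)), sum_cot_add_mul_cot h] at hmul
  rw [hmul, sub_div, mul_div_cancel_left₀ _ ha']

lemma dedekindDieter_add_one {a : ℕ} {θ : ℝ} (h : sin ((a + 1) * (π * θ)) ≠ 0) :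
    dedekindDieter a (a + 1) (a * θ) ((a + 1) * θ)
      = 1 + cot (π * θ) * cot ((a + 1) * (π * θ)) - 1 / sin (π * θ) ^ 2 / (a + 1) := by
  have hreflect := dedekindDieter_self_sub 1 a.succ_ne_zero θ
  have hone := dedekindDieter_one (a := a + 1) (θ := θ) (by exact_mod_cast h)
  push_cast [add_sub_cancel_right, one_mul] at hreflect hone
  rw [hreflect, hone, neg_sub]

lemma dedekindDieter_self_sub_of_dvd_succ {d N : ℕ} (hN : N ≠ 0) (hdvd : d ∣ N + 1) {θ : ℝ}
    {j : ℤ} (hθ : (N + 1) * θ = j) (hd : sin (d * (π * θ)) ≠ 0) :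
    dedekindDieter (N - d) N ((N - d) * θ) (N * θ)
      = 2 - (1 / sin (π * θ) ^ 2 / N + (1 + cot (π * θ) ^ 2)) / d := by
  have hN' : (N : ℝ) ≠ 0 := by exact_mod_cast hN
  have hx : (N + 1) * (π * θ) = j * π := by rw [← hθ]; ring
  have hreflect := dedekindDieter_self_sub d hN θ
  rw [dedekindDieter_eq_sum_cot d hN] at hreflect
  simp only [Int.cast_natCast, sum_cot_mul_cot_add_of_dvd_succ hd hdvd hx] at hreflect
  rw [hreflect]
  field_simp
  ring

theorem stmt_5_general {a m : ℕ} (hm : m ≠ 0) (hdvd : a * (a + 1) ∣ m) {θ : ℝ} {j : ℤ}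
    (hθ : m * θ = j) (hθ' : ∀ i : ℤ, a * (a + 1) * θ ≠ i) :
    1 / (a * (a + 1) * (m - 1)) * (1 / sin (π * θ) ^ 2) - 1
      + dedekindDieter 1 a θ (a * θ)
      + dedekindDieter a (a + 1) (a * θ) ((a + 1) * θ)
      + dedekindDieter (m - 1 - a * (a + 1)) (m - 1) ((m - 1 - a * (a + 1)) * θ) ((m - 1) * θ)
      = -(cot (a * (π * θ)) * cot ((a + 1) * (π * θ))) := by
  obtain ⟨N, rfl⟩ := Nat.exists_eq_succ_of_ne_zero hm
  have hsin_mul : sin ((a * (a + 1) : ℕ) * (π * θ)) ≠ 0 := by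
    rw [Ne, sin_eq_zero_iff]
    rintro ⟨i, hi⟩
    refine hθ' i (mul_left_cancel₀ pi_ne_zero ?_)
    push_cast at hi
    linarith
  have hsin_a := sin_natCast_mul_ne_zero_of_dvd (dvd_mul_right a (a + 1)) hsin_mul
  have hsin_succ := sin_natCast_mul_ne_zero_of_dvd (dvd_mul_left (a + 1) a) hsin_mul
  have hsin := sin_ne_zero_of_natCast_mul hsin_a
  have ha : a ≠ 0 := by rintro rfl; simp at hsin_a
  have hN : N ≠ 0 := by
    rintro rfl
    exact ha (Nat.succ_injective (Nat.eq_one_of_mul_eq_one_left (Nat.dvd_one.mp hdvd)))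
  push_cast at hθ hsin_succ ⊢
  have hthird := dedekindDieter_self_sub_of_dvd_succ hN hdvd hθ hsin_mul
  push_cast at hthird
  have ha' : (a : ℝ) ≠ 0 := by exact_mod_cast ha
  have ha'' : (a : ℝ) + 1 ≠ 0 := by positivity
  have hN' : (N : ℝ) ≠ 0 := by exact_mod_cast hN
  rw [add_sub_cancel_right, add_sub_cancel_right, dedekindDieter_one hsin_a,
    dedekindDieter_add_one hsin_succ, hthird,
    cot_mul_cot_add_one_mul hsin hsin_a hsin_succ, one_div_sin_sq hsin]
  field_simp
  ring

/-- The α-invariant identity `α(Q(p;2,3,12pn−1)) = α(L(p;−2,3))` for primes `p ≥ 5`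
and `n ≥ 1`, expressed in terms of Dedekind–Dieter cotangent sums. -/
theorem stmt_5 (p n : ℕ) (hp : p.Prime) (hp5 : 5 ≤ p) (hn : 1 ≤ n) :
    (1 / (72 * (p : ℝ) * n - 6)) * (1 / Real.sin (π / p) ^ 2) - 1
      + dedekindDieter 1 2 (1 / (p : ℝ)) (2 / (p : ℝ))
      + dedekindDieter 2 3 (2 / (p : ℝ)) (3 / (p : ℝ))
      + dedekindDieter (12 * (p : ℤ) * n - 7) (12 * (p : ℤ) * n - 1)
          ((12 * (p : ℝ) * n - 7) / (p : ℝ)) ((12 * (p : ℝ) * n - 1) / (p : ℝ)) =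
      -(Real.cot (2 * π / p) * Real.cot (3 * π / p)) := by
  have hp6 : ¬ p ∣ 6 := fun h ↦ by
    rcases hp.dvd_mul.mp (show p ∣ 2 * 3 from h) with h | h <;>
      have := Nat.le_of_dvd (by norm_num) h <;> omega
  have hθ' (i : ℤ) : ((2 : ℕ) : ℝ) * ((2 : ℕ) + 1) * (1 / p) ≠ i := fun hi ↦ by
    have hi' : (6 : ℝ) = p * i := by rw [← hi]; field_simp; norm_num
    exact hp6 (Int.natCast_dvd_natCast.mp ⟨i, by exact_mod_cast hi'⟩)
  have h72 : 72 * (p : ℝ) * n - 6 = 6 * (12 * p * n - 1) := by ring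
  have h := stmt_5_general (a := 2) (m := 12 * p * n) (θ := 1 / p) (j := 12 * n)
    (by positivity) ⟨2 * p * n, by ring⟩ (by push_cast; field_simp) hθ'
  norm_num [mul_div_assoc, sub_sub, h72] at h ⊢
  exact h
end

section
/- Let p ≥ 5 be a prime. Then the Dedekind sum s(10p−1, 12p−1) equals (−4p² − 1)/(24p − 2). -/
open Real
open scoped Classical

/-- The generalized sawtooth function `((x))`. -/
noncomputable def saw (x : ℝ) : ℝ :=
  if ∃ m : ℤ, x = m then 0 else Int.fract x - 1 / 2

/-- The Dedekind–Rademacher sum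
`s(b,a;x,y) = ∑_{k=0}^{|a|−1} ((x + (b/a)(k+y))) (((k+y)/a))`. -/
noncomputable def dedekindRademacher (b a : ℤ) (x y : ℝ) : ℝ :=
  ∑ k ∈ Finset.range a.natAbs,
    saw (x + (b : ℝ) / (a : ℝ) * ((k : ℝ) + y)) * saw (((k : ℝ) + y) / (a : ℝ))

/-- The ordinary Dedekind sum `s(b, a) = s(b, a; 0, 0)`. -/
noncomputable def dedekindSum (b a : ℤ) : ℝ := dedekindRademacher b a 0 0

/-!
The value is found by running the Euclidean algorithm on `12p - 1` and `10p - 1`, whose remainders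
are `2p` and `-1`: reciprocity is applied twice, and `s(-1, 2p) = -s(1, 2p)` is elementary.

Reciprocity for coprime `a, b > 0` comes from `(((u)) + ((v)) - ((u + v)))² = 1/4`, valid when none
of `u`, `v`, `u + v` is an integer. Sum it over `u = j/b`, `v = k/a`. The distribution relation
`∑ₖ ((x + k/a)) = ((ax))` turns the cross terms into `s(a, b)` and `s(b, a)`, and the Chinese
remainder theorem turns the sum of `((u + v))²` into `s(1, ab)`.
-/

section Sawtooth

lemma saw_intCast (m : ℤ) : saw m = 0 :=
  if_pos ⟨m, rfl⟩

lemma saw_zero : saw 0 = 0 := by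
  simpa using saw_intCast 0

lemma saw_of_not_int {x : ℝ} (hx : ¬∃ m : ℤ, x = m) : saw x = Int.fract x - 1 / 2 :=
  if_neg hx

lemma saw_add_intCast (x : ℝ) (m : ℤ) : saw (x + m) = saw x := by
  have hint : (∃ n : ℤ, x + m = n) ↔ ∃ n : ℤ, x = n :=
    ⟨fun ⟨n, hn⟩ => ⟨n - m, by push_cast; linarith⟩, fun ⟨n, hn⟩ => ⟨n + m, by push_cast; linarith⟩⟩
  simp only [saw, hint, Int.fract_add_intCast]

lemma saw_periodic : Function.Periodic saw 1 := fun x => by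
  simpa using saw_add_intCast x 1

lemma saw_neg (x : ℝ) : saw (-x) = -saw x := by
  by_cases hx : ∃ m : ℤ, x = m
  · obtain ⟨m, rfl⟩ := hx
    rw [← Int.cast_neg, saw_intCast, saw_intCast, neg_zero]
  · have hneg : ¬∃ m : ℤ, -x = m := fun ⟨m, hm⟩ => hx ⟨-m, by push_cast; linarith⟩
    have hfract : Int.fract x ≠ 0 := fun h => hx <| by
      obtain ⟨m, hm⟩ := Int.fract_eq_zero_iff.1 h
      exact ⟨m, hm.symm⟩
    rw [saw_of_not_int hx, saw_of_not_int hneg, Int.fract_neg hfract]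
    ring

lemma saw_of_mem_Ico {x : ℝ} (hx : x ∈ Set.Ico (0 : ℝ) 1) :
    saw x = x - 1 / 2 + if x = 0 then 1 / 2 else 0 := by
  split_ifs with h
  · rw [h, saw_zero]
    norm_num
  · have hfract : Int.fract x = x := Int.fract_eq_self.2 hx
    have hint : ¬∃ m : ℤ, x = m := by
      rintro ⟨m, rfl⟩
      exact h (by rw [← hfract, Int.fract_intCast])
    rw [saw_of_not_int hint, hfract, add_zero]

/-- Since `{u} + {v} - {u + v} ∈ {0, 1}`, the quantity being squared is `±1/2`. -/
lemma sq_saw_add_saw_sub_saw_add {u v : ℝ} (hu : ¬∃ m : ℤ, u = m) (hv : ¬∃ m : ℤ, v = m)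
    (huv : ¬∃ m : ℤ, u + v = m) : (saw u + saw v - saw (u + v)) ^ 2 = 1 / 4 := by
  rw [saw_of_not_int hu, saw_of_not_int hv, saw_of_not_int huv]
  rcases lt_or_ge (Int.fract u + Int.fract v) 1 with h | h
  · have hfract : Int.fract (u + v) = Int.fract u + Int.fract v := by
      rw [Int.fract_eq_iff]
      refine ⟨add_nonneg (Int.fract_nonneg u) (Int.fract_nonneg v), h, ⌊u⌋ + ⌊v⌋, ?_⟩
      push_cast [Int.fract]
      ring
    rw [hfract]
    ring
  · have hfract : Int.fract (u + v) = Int.fract u + Int.fract v - 1 := by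
      rw [Int.fract_eq_iff]
      refine ⟨sub_nonneg.2 h, by linarith [Int.fract_lt_one u, Int.fract_lt_one v],
        ⌊u⌋ + ⌊v⌋ + 1, ?_⟩
      push_cast [Int.fract]
      ring
    rw [hfract]
    ring

lemma sum_range_saw_add_div_of_mem_Ico {n : ℕ} (hn : 0 < n) {x : ℝ}
    (hx : x ∈ Set.Ico (0 : ℝ) (1 / n)) :
    ∑ k ∈ Finset.range n, saw (x + k / n) = saw (n * x) := by
  have hn' : (0 : ℝ) < n := Nat.cast_pos.2 hn
  have hnx : n * x < 1 := by
    rw [mul_comm]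
    exact (lt_div_iff₀ hn').1 hx.2
  have hterm : ∀ k ∈ Finset.range n, saw (x + k / n) =
      (x + k / n - 1 / 2) + if k = 0 then (if x = 0 then 1 / 2 else 0) else 0 := by
    intro k hk
    have hk' : (k : ℝ) + 1 ≤ n := by exact_mod_cast Finset.mem_range.1 hk
    have hmem : x + k / n ∈ Set.Ico (0 : ℝ) 1 := by
      refine ⟨add_nonneg hx.1 (by positivity), ?_⟩
      rw [← mul_lt_mul_iff_right₀ hn', mul_add, mul_div_cancel₀ _ hn'.ne']
      linarith
    have hzero : x + k / n = 0 ↔ k = 0 ∧ x = 0 := by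
      rw [add_eq_zero_iff_of_nonneg hx.1 (by positivity), div_eq_zero_iff, Nat.cast_eq_zero,
        or_iff_left hn'.ne', and_comm]
    simp only [saw_of_mem_Ico hmem, hzero, ite_and]
  have hlinear (m : ℕ) : ∑ k ∈ Finset.range m, (x + k / n - 1 / 2) =
      m * (x - 1 / 2) + m * (m - 1) / (2 * n) := by
    induction m with
    | zero => simp
    | succ m ih =>
      rw [Finset.sum_range_succ, ih]
      push_cast
      field_simp
      ring
  rw [Finset.sum_congr rfl hterm, Finset.sum_add_distrib, hlinear, Finset.sum_ite_eq',
    if_pos (Finset.mem_range.2 hn), saw_of_mem_Ico ⟨mul_nonneg hn'.le hx.1, hnx⟩]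
  simp only [mul_eq_zero, hn'.ne', false_or]
  field_simp
  ring

lemma sum_range_saw_add_div_periodic {n : ℕ} (hn : 0 < n) :
    Function.Periodic (fun x : ℝ => ∑ k ∈ Finset.range n, saw (x + k / n)) (1 / n) := by
  intro x
  have hn' : (n : ℝ) ≠ 0 := Nat.cast_ne_zero.2 hn.ne'
  have hshift (k : ℕ) : x + 1 / n + k / n = x + (k + 1 : ℕ) / n := by
    push_cast
    ring
  have hwrap : saw (x + n / n) = saw (x + (0 : ℕ) / n) := by
    simpa [div_self hn'] using saw_periodic x
  simp only [hshift]
  have hsucc := Finset.sum_range_succ (fun k : ℕ => saw (x + k / n)) n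
  rw [Finset.sum_range_succ', hwrap] at hsucc
  exact add_right_cancel hsucc

/-- Both sides are `1/n`-periodic in `x`, which reduces the identity to `0 ≤ x < 1/n`. -/
theorem sum_range_saw_add_div (n : ℕ) (x : ℝ) :
    ∑ k ∈ Finset.range n, saw (x + k / n) = saw (n * x) := by
  rcases Nat.eq_zero_or_pos n with rfl | hn
  · simp [saw_zero]
  have hn' : (0 : ℝ) < n := Nat.cast_pos.2 hn
  have hright : Function.Periodic (fun x : ℝ => saw (n * x)) (1 / n) := by
    simpa only [one_div, mul_one] using saw_periodic.const_mul (n : ℝ)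
  obtain ⟨y, hy, hxy⟩ :=
    ((sum_range_saw_add_div_periodic hn).sub hright).exists_mem_Ico₀ (one_div_pos.2 hn') x
  have hdiff := hxy.trans (sub_eq_zero.2 (sum_range_saw_add_div_of_mem_Ico hn hy))
  exact sub_eq_zero.1 hdiff

lemma sum_range_saw_div (n : ℕ) : ∑ k ∈ Finset.range n, saw (k / n) = 0 := by
  simpa [saw_zero] using sum_range_saw_add_div n 0

lemma sum_range_sq_saw_div {n : ℕ} (hn : 0 < n) :
    ∑ k ∈ Finset.range n, saw (k / n) ^ 2 = ((n : ℝ) - 1) * (n - 2) / (12 * n) := by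
  have hn' : (0 : ℝ) < n := Nat.cast_pos.2 hn
  have hterm : ∀ k ∈ Finset.range n,
      saw (k / n) ^ 2 = ((k : ℝ) / n - 1 / 2) ^ 2 - if k = 0 then 1 / 4 else 0 := by
    intro k hk
    have hmem : (k : ℝ) / n ∈ Set.Ico (0 : ℝ) 1 :=
      ⟨by positivity, (div_lt_one hn').2 (Nat.cast_lt.2 (Finset.mem_range.1 hk))⟩
    rw [saw_of_mem_Ico hmem]
    by_cases h : k = 0
    · norm_num [h]
    · simp [h, hn.ne']
  have hsquares (m : ℕ) : ∑ k ∈ Finset.range m, ((k : ℝ) / n - 1 / 2) ^ 2 =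
      (m : ℝ) * (m - 1) * (2 * m - 1) / (6 * n ^ 2) - m * (m - 1) / (2 * n) + m / 4 := by
    induction m with
    | zero => simp
    | succ m ih =>
      rw [Finset.sum_range_succ, ih]
      push_cast
      field_simp
      ring
  rw [Finset.sum_congr rfl hterm, Finset.sum_sub_distrib, hsquares, Finset.sum_ite_eq',
    if_pos (Finset.mem_range.2 hn)]
  field_simp
  ring

end Sawtooth

section DedekindSum

lemma dedekindSum_eq_sum (b a : ℤ) :
    dedekindSum b a = ∑ k ∈ Finset.range a.natAbs, saw (b * k / a) * saw (k / a) := by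
  simp only [dedekindSum, dedekindRademacher, zero_add, add_zero, div_mul_eq_mul_div]

lemma dedekindSum_congr {b c a : ℤ} (h : b ≡ c [ZMOD a]) : dedekindSum b a = dedekindSum c a := by
  rcases eq_or_ne a 0 with rfl | ha
  · simp [dedekindSum_eq_sum]
  · obtain ⟨m, hm⟩ := h.dvd
    have hc : (c : ℝ) = b + a * m := by exact_mod_cast (by linarith : c = b + a * m)
    have ha' : (a : ℝ) ≠ 0 := Int.cast_ne_zero.2 ha
    have hshift (k : ℕ) : (c : ℝ) * k / a = b * k / a + (m * k : ℤ) := by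
      rw [hc]
      push_cast
      field_simp
    simp only [dedekindSum_eq_sum, hshift, saw_add_intCast]

lemma dedekindSum_neg_left (b a : ℤ) : dedekindSum (-b) a = -dedekindSum b a := by
  simp only [dedekindSum_eq_sum, Int.cast_neg, neg_mul, neg_div, saw_neg, Finset.sum_neg_distrib]

lemma dedekindSum_one_left {a : ℤ} (ha : 0 < a) :
    dedekindSum 1 a = ((a : ℝ) - 1) * (a - 2) / (12 * a) := by
  lift a to ℕ using ha.le
  simpa [dedekindSum_eq_sum, sq] using sum_range_sq_saw_div (Int.natCast_pos.1 ha)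

end DedekindSum

section Reciprocity

lemma sum_range_sum_range_mul_add_mul {M : Type*} [AddCommMonoid M] {a b : ℕ} (hab : a.Coprime b)
    {f : ℕ → M} (hf : Function.Periodic f (a * b)) :
    ∑ j ∈ Finset.range b, ∑ k ∈ Finset.range a, f (j * a + k * b) =
      ∑ m ∈ Finset.range (a * b), f m := by
  let residue (q : ℕ × ℕ) : ℕ := (q.1 * a + q.2 * b) % (a * b)
  have hmaps : Set.MapsTo residue (Finset.range b ×ˢ Finset.range a : Finset (ℕ × ℕ))
      (Finset.range (a * b)) := by
    rintro ⟨j, k⟩ hjk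
    simp only [Finset.coe_product, Finset.coe_range, Set.mem_prod, Set.mem_Iio] at hjk
    exact Finset.mem_coe.2 <| Finset.mem_range.2 <|
      Nat.mod_lt _ (Nat.mul_pos (by omega) (by omega))
  have hinj : Set.InjOn residue (Finset.range b ×ˢ Finset.range a : Finset (ℕ × ℕ)) := by
    rintro ⟨j, k⟩ hjk ⟨j', k'⟩ hjk' (h : j * a + k * b ≡ j' * a + k' * b [MOD a * b])
    simp only [Finset.coe_product, Finset.coe_range, Set.mem_prod, Set.mem_Iio] at hjk hjk'
    have hj : j * a ≡ j' * a [MOD b] := by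
      simpa [Nat.ModEq] using h.of_mul_left a
    have hk : k * b ≡ k' * b [MOD a] := by
      simpa [Nat.ModEq] using h.of_mul_right b
    exact Prod.ext
      ((hj.cancel_right_of_coprime hab.symm).eq_of_lt_of_lt hjk.1 hjk'.1)
      ((hk.cancel_right_of_coprime hab).eq_of_lt_of_lt hjk.2 hjk'.2)
  rw [← Finset.sum_product' (f := fun j k => f (j * a + k * b))]
  refine Finset.sum_nbij residue hmaps hinj ?_ fun q _ => (hf.map_mod_nat _).symm
  exact Finset.surjOn_of_injOn_of_card_le residue hmaps hinj (by simp [mul_comm])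

lemma not_exists_int_div_add_div {a b j : ℕ} (hab : a.Coprime b) (ha : 0 < a) (hj : 0 < j)
    (hjb : j < b) (k : ℕ) : ¬∃ m : ℤ, (j : ℝ) / b + k / a = m := by
  rintro ⟨m, hm⟩
  have ha' : (a : ℝ) ≠ 0 := Nat.cast_ne_zero.2 ha.ne'
  have hb' : (b : ℝ) ≠ 0 := Nat.cast_ne_zero.2 (by omega)
  have hcast : (j * a + b * k : ℤ) = b * a * m := by
    field_simp at hm
    exact_mod_cast hm
  have hdvd : (b : ℤ) ∣ (j * a : ℕ) := ⟨a * m - k, by push_cast; linarith⟩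
  exact Nat.not_dvd_of_pos_of_lt hj hjb
    (hab.symm.dvd_of_dvd_mul_right (Int.natCast_dvd_natCast.1 hdvd))

lemma not_exists_int_div {k n : ℕ} (hk : 0 < k) (hkn : k < n) : ¬∃ m : ℤ, (k : ℝ) / n = m := by
  simpa using not_exists_int_div_add_div (Nat.coprime_one_left n) one_pos hk hkn 0

lemma sum_sum_saw_mul_saw_add (a b : ℕ) :
    ∑ j ∈ Finset.range b, ∑ k ∈ Finset.range a, saw (j / b) * saw (j / b + k / a) =
      dedekindSum a b := by
  simp only [← Finset.mul_sum, sum_range_saw_add_div, dedekindSum_eq_sum, Int.natAbs_natCast,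
    Int.cast_natCast, mul_div_assoc]
  exact Finset.sum_congr rfl fun j _ => mul_comm _ _

lemma sum_sum_sq_saw_add {a b : ℕ} (ha : 0 < a) (hb : 0 < b) (hab : a.Coprime b) :
    ∑ j ∈ Finset.range b, ∑ k ∈ Finset.range a, saw (j / b + k / a) ^ 2 =
      ((a : ℝ) * b - 1) * (a * b - 2) / (12 * (a * b)) := by
  have ha' : (a : ℝ) ≠ 0 := Nat.cast_ne_zero.2 ha.ne'
  have hb' : (b : ℝ) ≠ 0 := Nat.cast_ne_zero.2 hb.ne'
  have hperiodic : Function.Periodic (fun m : ℕ => saw (m / (a * b : ℕ)) ^ 2) (a * b) := by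
    intro m
    have hadd : ((m + a * b : ℕ) : ℝ) / (a * b : ℕ) = m / (a * b : ℕ) + 1 := by
      push_cast
      field_simp
    simp only [hadd, saw_periodic _]
  have hdiv (j k : ℕ) : (j : ℝ) / b + k / a = (j * a + k * b : ℕ) / (a * b : ℕ) := by
    push_cast
    field_simp
  simp only [hdiv]
  rw [sum_range_sum_range_mul_add_mul hab hperiodic, sum_range_sq_saw_div (Nat.mul_pos ha hb),
    Nat.cast_mul]

lemma sum_sum_sq_saw_add_saw_sub_saw_add {a b : ℕ} (ha : 0 < a) (hb : 0 < b)
    (hab : a.Coprime b) :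
    ∑ j ∈ Finset.range b, ∑ k ∈ Finset.range a,
      (saw (j / b) + saw (k / a) - saw (j / b + k / a)) ^ 2 = ((a : ℝ) - 1) * (b - 1) / 4 := by
  have hterm : ∀ j ∈ Finset.range b, ∀ k ∈ Finset.range a,
      (saw (j / b) + saw (k / a) - saw (j / b + k / a)) ^ 2 =
        (1 / 4) * ((1 - if j = 0 then 1 else 0) * (1 - if k = 0 then 1 else 0)) := by
    intro j hj k hk
    rcases Nat.eq_zero_or_pos j with rfl | hj0
    · simp [saw_zero]
    rcases Nat.eq_zero_or_pos k with rfl | hk0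
    · simp [saw_zero]
    have hjb := Finset.mem_range.1 hj
    rw [sq_saw_add_saw_sub_saw_add (not_exists_int_div hj0 hjb)
      (not_exists_int_div hk0 (Finset.mem_range.1 hk))
      (not_exists_int_div_add_div hab ha hj0 hjb k)]
    simp [hj0.ne', hk0.ne']
  have hcount {n : ℕ} (hn : 0 < n) :
      ∑ k ∈ Finset.range n, ((1 : ℝ) - if k = 0 then 1 else 0) = n - 1 := by
    simp [Finset.sum_sub_distrib, hn.ne']
  rw [Finset.sum_congr rfl fun j hj => Finset.sum_congr rfl (hterm j hj)]
  simp only [← Finset.mul_sum, ← Finset.sum_mul, hcount ha, hcount hb]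
  ring

theorem dedekindSum_add_dedekindSum_swap {a b : ℤ} (ha : 0 < a) (hb : 0 < b)
    (hab : IsCoprime a b) :
    dedekindSum a b + dedekindSum b a =
      -1 / 4 + ((a : ℝ) / b + b / a + 1 / (a * b)) / 12 := by
  lift a to ℕ using ha.le
  lift b to ℕ using hb.le
  rw [Nat.isCoprime_iff_coprime] at hab
  rw [Int.natCast_pos] at ha hb
  have hsum := sum_sum_sq_saw_add_saw_sub_saw_add ha hb hab
  have hexpand (x y z : ℝ) :
      (x + y - z) ^ 2 = x ^ 2 + y ^ 2 + z ^ 2 + 2 * (x * y) - 2 * (x * z) - 2 * (y * z) := by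
    ring
  have hxx : ∑ j ∈ Finset.range b, ∑ _k ∈ Finset.range a, saw (j / b) ^ 2 =
      a * (((b : ℝ) - 1) * (b - 2) / (12 * b)) := by
    simp only [Finset.sum_const, Finset.card_range, nsmul_eq_mul, ← Finset.mul_sum,
      sum_range_sq_saw_div hb]
  have hyy : ∑ _j ∈ Finset.range b, ∑ k ∈ Finset.range a, saw (k / a) ^ 2 =
      b * (((a : ℝ) - 1) * (a - 2) / (12 * a)) := by
    simp only [Finset.sum_const, Finset.card_range, nsmul_eq_mul, sum_range_sq_saw_div ha]
  have hxy : ∑ j ∈ Finset.range b, ∑ k ∈ Finset.range a, saw (j / b) * saw (k / a) = 0 := by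
    rw [← Finset.sum_mul_sum, sum_range_saw_div, zero_mul]
  have hyz : ∑ j ∈ Finset.range b, ∑ k ∈ Finset.range a, saw (k / a) * saw (j / b + k / a) =
      dedekindSum b a := by
    rw [Finset.sum_comm, ← sum_sum_saw_mul_saw_add b a]
    simp only [add_comm]
  simp only [hexpand, Finset.sum_sub_distrib, Finset.sum_add_distrib, two_mul, hxx, hyy, hxy, hyz,
    sum_sum_saw_mul_saw_add, sum_sum_sq_saw_add ha hb hab] at hsum
  have ha' : (a : ℝ) ≠ 0 := Nat.cast_ne_zero.2 ha.ne'
  have hb' : (b : ℝ) ≠ 0 := Nat.cast_ne_zero.2 hb.ne'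
  push_cast
  field_simp at hsum ⊢
  linarith

end Reciprocity

theorem stmt_9_general (p : ℕ) (hp : 0 < p) :
    dedekindSum (10 * (p : ℤ) - 1) (12 * (p : ℤ) - 1) =
      (-4 * (p : ℝ) ^ 2 - 1) / (24 * (p : ℝ) - 2) := by
  have hp' : (1 : ℝ) ≤ p := Nat.one_le_cast.2 hp
  have hfirst := dedekindSum_add_dedekindSum_swap (a := 10 * p - 1) (b := 12 * p - 1)
    (by omega) (by omega) ⟨-6, 5, by ring⟩
  have hsecond := dedekindSum_add_dedekindSum_swap (a := 2 * p) (b := 10 * p - 1)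
    (by omega) (by omega) ⟨5, -1, by ring⟩
  have hmod₁ : 12 * (p : ℤ) - 1 ≡ 2 * p [ZMOD 10 * p - 1] :=
    Int.modEq_iff_dvd.2 ⟨-1, by ring⟩
  have hmod₂ : 10 * (p : ℤ) - 1 ≡ -1 [ZMOD 2 * p] := Int.modEq_iff_dvd.2 ⟨-5, by ring⟩
  rw [dedekindSum_congr hmod₁] at hfirst
  rw [dedekindSum_congr hmod₂, dedekindSum_neg_left,
    dedekindSum_one_left (by omega)] at hsecond
  rw [eq_sub_of_add_eq hfirst, eq_add_of_add_neg_eq hsecond]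
  push_cast
  have h₀ : (p : ℝ) ≠ 0 := by linarith
  have h₁₂ : (p : ℝ) * 12 - 1 ≠ 0 := by linarith
  have h₁₀ : 10 * (p : ℝ) - 1 ≠ 0 := by linarith
  rw [(by ring : 24 * (p : ℝ) - 2 = 2 * (p * 12 - 1))]
  field_simp
  ring

/-- For a prime `p ≥ 5`, `s(10p−1, 12p−1) = (−4p² − 1)/(24p − 2)`. -/
theorem stmt_9 (p : ℕ) (hp : p.Prime) (hp5 : 5 ≤ p) :
    dedekindSum (10 * (p : ℤ) - 1) (12 * (p : ℤ) - 1) =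
      (-4 * (p : ℝ) ^ 2 - 1) / (24 * (p : ℝ) - 2) :=
  stmt_9_general p hp.pos
end
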